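/- arXiv:1410.2336 — 2 statements merged into one kernel-verified Lean document; each statement's English description precedes it below -/
import Mathlib

section
/- Let u, u′ ∈ ℂ^{2n} and let A, A′ ∈ M_{2n}(ℂ) satisfy J⁻¹ Aᵀ J = A and J⁻¹ A′ᵀ J = A′. Suppose there exists g ∈ GL_{2n}(ℂ) such that g u = u′, θ(g) u = u′, and g A g⁻¹ = A′ (that is, g maps (u, uᵀ) + A to (u′, u′ᵀ) + A′ under the enhanced action). Then there exists h ∈ Sp_{2n}(ℂ) such that h u = u′ and h A h⁻¹ = A′. In other words, every GL_{2n}(ℂ)-orbit in L̃ meets the subspace {(u, uᵀ) + A : u ∈ ℂ^{2n}, J⁻¹AᵀJ = A} (the enhanced θ-representation, isomorphic to V ⊕ Λ²V) in at most one Sp_{2n}(ℂ)-orbit. -/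
open Matrix

/-- The standard symplectic form matrix `J = [[0, 1ₙ], [−1ₙ, 0]]` on `ℂ^{2n}`,
with `ℂ^{2n}` indexed by `Fin n ⊕ Fin n`. -/
noncomputable def J (n : ℕ) : Matrix (Fin n ⊕ Fin n) (Fin n ⊕ Fin n) ℂ :=
  Matrix.fromBlocks 0 1 (-1) 0

/-- The involutive anti-automorphism `σ(g) = J⁻¹ gᵀ J`. -/
noncomputable def sigmaG (n : ℕ) (g : Matrix (Fin n ⊕ Fin n) (Fin n ⊕ Fin n) ℂ) :
    Matrix (Fin n ⊕ Fin n) (Fin n ⊕ Fin n) ℂ :=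
  (J n)⁻¹ * gᵀ * J n

/-- The involutive automorphism `θ(g) = σ(g)⁻¹`. -/
noncomputable def thetaG (n : ℕ) (g : Matrix (Fin n ⊕ Fin n) (Fin n ⊕ Fin n) ℂ) :
    Matrix (Fin n ⊕ Fin n) (Fin n ⊕ Fin n) ℂ :=
  (sigmaG n g)⁻¹

/-!
The element `x = σ(g) g` is fixed by `σ`, commutes with `A` and fixes `u`, because `σ(g)` undoes
the effect of `g` on `u` and on `A`. Choose a polynomial `p` with `p(x)² = x` and `p(1) = 1`: then
`s = p(x)` has the same three properties, so `h = g s⁻¹` moves `u` and `A` exactly as `g` does,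
while `σ(h) h = s⁻¹ x s⁻¹ = 1`.
-/

open Polynomial

section SquareRoot

variable {K : Type*} [Field K] [IsAlgClosed K] [NeZero (2 : K)]

/-- A root `c` of `m(a) c² + 2 p(a) c + r(a)`, where `p² - X = m r`, makes `p + c m` a square root
of `X` modulo `m (X - a)`. The discriminant of this quadratic is `4 a`. -/
theorem exists_mul_X_sub_C_dvd_sq_sub_X {m p : K[X]} {a : K} (ha : a ≠ 0)
    (hp : m ∣ p ^ 2 - X) : ∃ q : K[X], m * (X - C a) ∣ q ^ 2 - X := by
  obtain ⟨r, hr⟩ := hp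
  obtain ⟨c, hc⟩ : ∃ c : K, m.eval a * (c * c) + 2 * p.eval a * c + r.eval a = 0 := by
    have hra : p.eval a ^ 2 - a = m.eval a * r.eval a := by simpa using congrArg (eval a) hr
    by_cases hma : m.eval a = 0
    · have hpa : p.eval a ≠ 0 := by
        intro hpa
        simp [hpa, hma, ha] at hra
      refine ⟨-r.eval a / (2 * p.eval a), ?_⟩
      have := two_ne_zero (α := K)
      rw [hma]
      field_simp
      ring
    · obtain ⟨b, hb⟩ := IsAlgClosed.exists_eq_mul_self a
      refine exists_quadratic_eq_zero hma ⟨2 * b, ?_⟩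
      rw [discrim]
      linear_combination 4 * hra + 4 * hb
  have hdvd : X - C a ∣ m * C (c ^ 2) + 2 * p * C c + r := by
    rw [dvd_iff_isRoot, IsRoot.def]
    simpa [sq] using hc
  refine ⟨p + C c * m, ?_⟩
  convert mul_dvd_mul_left m hdvd using 1
  rw [C_pow]
  linear_combination hr

theorem exists_dvd_sq_sub_X {m : K[X]} (hm : m.eval 0 ≠ 0) : ∃ p : K[X], m ∣ p ^ 2 - X := by
  have prod_case (s : Multiset K) (hs : 0 ∉ s) :
      ∃ p : K[X], (s.map fun a => X - C a).prod ∣ p ^ 2 - X := by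
    induction s using Multiset.induction_on with
    | empty => exact ⟨0, by simp⟩
    | cons a s ih =>
      rw [Multiset.mem_cons, not_or] at hs
      obtain ⟨p, hp⟩ := ih hs.2
      simpa only [Multiset.map_cons, Multiset.prod_cons, mul_comm] using
        exists_mul_X_sub_C_dvd_sq_sub_X (Ne.symm hs.1) hp
  have hm0 : m ≠ 0 := by
    rintro rfl
    exact hm eval_zero
  obtain ⟨p, hp⟩ := prod_case m.roots fun h => hm (isRoot_of_mem_roots h)
  refine ⟨p, ?_⟩
  rwa [(IsAlgClosed.splits m).eq_prod_roots, C_mul_dvd (leadingCoeff_ne_zero.2 hm0)]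

theorem exists_dvd_sq_sub_X_and_eval_one_eq_one {m : K[X]} (hm : m.eval 0 ≠ 0) :
    ∃ p : K[X], m ∣ p ^ 2 - X ∧ p.eval 1 = 1 := by
  obtain ⟨p, hp⟩ := exists_dvd_sq_sub_X (m := m * (X - C 1)) (by simpa using hm)
  have hmp : m ∣ p ^ 2 - X := (dvd_mul_right _ _).trans hp
  have hp1 : p.eval 1 ^ 2 = 1 := by
    have : (p ^ 2 - X).IsRoot 1 := dvd_iff_isRoot.1 ((dvd_mul_left _ _).trans hp)
    simpa [sub_eq_zero] using this
  rcases sq_eq_one_iff.1 hp1 with h | h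
  · exact ⟨p, hmp, h⟩
  · exact ⟨-p, by rwa [neg_sq], by rw [eval_neg, h, neg_neg]⟩

end SquareRoot

section Aeval

variable {K R : Type*} [Field K] [Ring R] [Algebra K R]

theorem minpoly_eval_zero_ne_zero {x : R} (hint : IsIntegral K x) (hx : IsUnit x) :
    (minpoly K x).eval 0 ≠ 0 := by
  intro h
  obtain ⟨r, hr⟩ : X ∣ minpoly K x := by rwa [X_dvd_iff, coeff_zero_eq_eval_zero]
  have hr0 : r ≠ 0 := by
    rintro rfl
    exact minpoly.ne_zero hint (by rw [hr, mul_zero])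
  have hxr : x * aeval x r = 0 := by simpa [hr] using minpoly.aeval K x
  have hdvd : X * r ∣ 1 * r := by
    rw [← hr, one_mul]
    exact minpoly.dvd K x (hx.mul_right_eq_zero.1 hxr)
  exact not_isUnit_X (isUnit_of_dvd_one ((mul_dvd_mul_iff_right hr0).1 hdvd))

theorem exists_aeval_sq_eq_and_eval_one_eq_one [IsAlgClosed K] [NeZero (2 : K)] {x : R}
    (hint : IsIntegral K x) (hx : IsUnit x) : ∃ p : K[X], aeval x p ^ 2 = x ∧ p.eval 1 = 1 := by
  obtain ⟨p, ⟨r, hr⟩, hp1⟩ :=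
    exists_dvd_sq_sub_X_and_eval_one_eq_one (minpoly_eval_zero_ne_zero hint hx)
  refine ⟨p, ?_, hp1⟩
  simpa [sub_eq_zero] using congrArg (aeval x) hr

end Aeval

theorem aeval_smul_of_smul_eq_smul {K R V : Type*} [CommRing K] [Ring R] [Algebra K R]
    [AddCommGroup V] [Module K V] [Module R V] [IsScalarTower K R V] {x : R} {v : V} {μ : K}
    (hv : x • v = μ • v) (p : K[X]) : aeval x p • v = p.eval μ • v := by
  have := Module.End.aeval_apply_of_mem_apply_eq_smul (f := Algebra.lsmul K K V x) (p := p) hv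
  rwa [aeval_algHom_apply] at this

-- `hstar` replaces `StarModule`, which would make `star` conjugate-linear over `ℂ`.
theorem isSelfAdjoint_aeval {K R : Type*} [CommSemiring K] [Semiring R] [StarRing R] [Algebra K R]
    (hstar : ∀ (c : K) (y : R), star (c • y) = c • star y) {x : R} (hx : IsSelfAdjoint x)
    (p : K[X]) : IsSelfAdjoint (aeval x p) := by
  induction p using Polynomial.induction_on' with
  | add p q hp hq => simpa only [map_add] using hp.add hq
  | monomial n a =>
    rw [aeval_monomial, ← Algebra.smul_def, isSelfAdjoint_iff, hstar, (hx.pow n).star_eq]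

theorem mul_inv_mem_unitary_of_sq_eq_star_mul_self {R : Type*} [Monoid R] [StarMul R] {g s : Rˣ}
    (hs : IsSelfAdjoint s) (hsg : s ^ 2 = star g * g) : ((g * s⁻¹ : Rˣ) : R) ∈ unitary R := by
  rw [(g * s⁻¹).isUnit.mem_unitary_iff_star_mul_self, ← Units.coe_star, ← Units.val_mul,
    Units.val_eq_one]
  calc star (g * s⁻¹) * (g * s⁻¹) = s⁻¹ * (star g * g) * s⁻¹ := by
        rw [star_mul, star_inv, hs.star_eq]
        group
    _ = 1 := by
        rw [← hsg]
        group

section StarAlgebra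

variable {K R : Type*} [Field K] [IsAlgClosed K] [NeZero (2 : K)] [Ring R] [StarRing R]
  [Algebra K R]

theorem exists_polar_decomposition (hstar : ∀ (c : K) (x : R), star (c • x) = c • star x) {g : Rˣ}
    (hint : IsIntegral K (star (g : R) * g)) :
    ∃ h ∈ unitary R, ∃ s : Rˣ, (g : R) = h * s ∧
      ∃ p : K[X], aeval (star (g : R) * g) p = s ∧ p.eval 1 = 1 := by
  have hx : IsUnit (star (g : R) * g) := (star g * g).isUnit
  obtain ⟨p, hp, hp1⟩ := exists_aeval_sq_eq_and_eval_one_eq_one hint hx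
  obtain ⟨s, hs⟩ : IsUnit (aeval (star (g : R) * g) p) := by
    rwa [← isUnit_pow_iff two_ne_zero, hp]
  have hs_star : IsSelfAdjoint s := by
    rw [isSelfAdjoint_iff, Units.ext_iff, Units.coe_star, hs]
    exact isSelfAdjoint_aeval hstar (.star_mul_self (g : R)) p
  have hsg : s ^ 2 = star g * g := by
    rw [Units.ext_iff, Units.val_pow_eq_pow_val, hs, hp, Units.val_mul, Units.coe_star]
  exact ⟨_, mul_inv_mem_unitary_of_sq_eq_star_mul_self hs_star hsg, s, by simp, p, hs.symm, hp1⟩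

theorem exists_mem_unitary_smul_eq_and_mul_eq_mul {V : Type*} [AddCommGroup V] [Module K V]
    [Module R V] [IsScalarTower K R V] (hstar : ∀ (c : K) (x : R), star (c • x) = c • star x)
    {u u' : V} {A A' : R} (hA : IsSelfAdjoint A) (hA' : IsSelfAdjoint A') {g : Rˣ}
    (hint : IsIntegral K (star (g : R) * g)) (hu : (g : R) • u = u')
    (hu' : star (g : R) • u' = u) (hgA : g * A = A' * g) :
    ∃ h ∈ unitary R, h • u = u' ∧ h * A = A' * h := by
  obtain ⟨h, hh, s, hgs, p, hps, hp1⟩ := exists_polar_decomposition hstar hint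
  have hsu : (s : R) • u = u := by
    have hxu : (star (g : R) * g) • u = (1 : K) • u := by rw [mul_smul, hu, hu', one_smul]
    rw [← hps, aeval_smul_of_smul_eq_smul hxu, hp1, one_smul]
  have hsA : Commute A s := by
    have hAg : A * star (g : R) = star (g : R) * A' := by
      simpa only [star_mul, hA.star_eq, hA'.star_eq] using congrArg star hgA
    have hAx : Commute A (star (g : R) * g) := by
      rw [commute_iff_eq, ← mul_assoc, hAg, mul_assoc, ← hgA, mul_assoc]
    rw [← hps]
    exact Algebra.commute_of_mem_adjoin_singleton_of_commute (aeval_mem_adjoin_singleton K _) hAx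
  refine ⟨h, hh, ?_, s.isUnit.mul_right_cancel ?_⟩
  · rw [← hu, hgs, mul_smul, hsu]
  · rw [mul_assoc, hsA.eq, ← mul_assoc, ← hgs, hgA, hgs, mul_assoc]

end StarAlgebra

section Matrix

open scoped Matrix.Module

variable {ι K : Type*} [Fintype ι] [DecidableEq ι]

/-- The ring of square matrices with the involution `M ↦ J⁻¹ Mᵀ J`, the adjoint for the
nondegenerate symmetric or skew-symmetric bilinear form with matrix `J`. It is not an instance,
since the `star` that Mathlib puts on matrices is the conjugate transpose. -/
noncomputable abbrev formAdjointStarRing [CommRing K] {J : Matrix ι ι K} (hJ : IsUnit J)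
    (hJt : Jᵀ = J ∨ Jᵀ = -J) : StarRing (Matrix ι ι K) where
  star M := J⁻¹ * Mᵀ * J
  star_involutive M := by
    have hdet : IsUnit J.det := (isUnit_iff_isUnit_det J).1 hJ
    have hdouble : J⁻¹ * (J⁻¹ * Mᵀ * J)ᵀ * J = J⁻¹ * Jᵀ * M * ((Jᵀ)⁻¹ * J) := by
      simp only [transpose_mul, transpose_transpose, transpose_nonsing_inv, mul_assoc]
    have hneg : (-J)⁻¹ = -J⁻¹ := inv_eq_left_inv (by rw [neg_mul_neg, nonsing_inv_mul J hdet])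
    change J⁻¹ * (J⁻¹ * Mᵀ * J)ᵀ * J = M
    rw [hdouble]
    rcases hJt with h | h <;> simp [h, hneg, nonsing_inv_mul J hdet]
  star_mul M N := by
    have hdet : IsUnit J.det := (isUnit_iff_isUnit_det J).1 hJ
    simp only [transpose_mul, mul_assoc, mul_nonsing_inv_cancel_left J _ hdet]
  star_add M N := by rw [transpose_add, mul_add, add_mul]

theorem enhanced_theta_rep_orbit_embedding_Sp_general [Field K] [IsAlgClosed K] [NeZero (2 : K)]
    {J : Matrix ι ι K} (hJ : IsUnit J) (hJt : Jᵀ = J ∨ Jᵀ = -J) {u u' : ι → K}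
    {A A' : Matrix ι ι K} (hA : J⁻¹ * Aᵀ * J = A) (hA' : J⁻¹ * A'ᵀ * J = A')
    {g : Matrix ι ι K} (hg : IsUnit g) (h1 : g *ᵥ u = u')
    (h2 : (J⁻¹ * gᵀ * J)⁻¹ *ᵥ u = u') (h3 : g * A * g⁻¹ = A') :
    ∃ h : Matrix ι ι K, hᵀ * J * h = J ∧ h *ᵥ u = u' ∧ h * A * h⁻¹ = A' := by
  let := formAdjointStarRing hJ hJt
  have hstar (c : K) (M : Matrix ι ι K) : star (c • M) = c • star M := by
    change J⁻¹ * (c • M)ᵀ * J = c • (J⁻¹ * Mᵀ * J)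
    rw [transpose_smul, mul_smul_comm, smul_mul_assoc]
  have hu' : star g *ᵥ u' = u := by
    have hdet : IsUnit (star g).det := (isUnit_iff_isUnit_det _).1 hg.star
    rw [← h2, mulVec_mulVec]
    change (star g * (star g)⁻¹) *ᵥ u = u
    rw [mul_nonsing_inv _ hdet, one_mulVec]
  have hgA : g * A = A' * g := by
    rw [← h3, nonsing_inv_mul_cancel_right _ _ ((isUnit_iff_isUnit_det g).1 hg)]
  lift g to (Matrix ι ι K)ˣ using hg
  obtain ⟨h, hh, hu, hhA⟩ := exists_mem_unitary_smul_eq_and_mul_eq_mul hstar hA hA'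
    (Algebra.IsIntegral.isIntegral _) h1 hu' hgA
  have hhJ : J⁻¹ * hᵀ * J * h = 1 := hh.1
  have hdet : IsUnit h.det := isUnit_det_of_left_inverse hhJ
  have hJdet : IsUnit J.det := (isUnit_iff_isUnit_det J).1 hJ
  refine ⟨h, ?_, hu, by rw [hhA, mul_nonsing_inv_cancel_right _ _ hdet]⟩
  calc hᵀ * J * h = J * (J⁻¹ * hᵀ * J * h) := by
        simp only [mul_assoc, mul_nonsing_inv_cancel_left _ _ hJdet]
    _ = J := by rw [hhJ, mul_one]

end Matrix

theorem isUnit_J (n : ℕ) : IsUnit (_root_.J n) := by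
  have hneg : _root_.J n = -Matrix.J (Fin n) ℂ := by
    simp [_root_.J, Matrix.J, fromBlocks_neg]
  rw [hneg, IsUnit.neg_iff, isUnit_iff_isUnit_det]
  exact isUnit_det_J (Fin n) ℂ

theorem transpose_J (n : ℕ) : (_root_.J n)ᵀ = -_root_.J n := by
  simp [_root_.J, fromBlocks_transpose, fromBlocks_neg]

/-- Every `GL_{2n}(ℂ)`-orbit in the enhanced Lie algebra
`L̃ = ℂ^{2n} ⊕ (ℂ^{2n})* ⊕ gl_{2n}(ℂ)` meets the enhanced θ-representation
`{(u, uᵀ) + A : J⁻¹ Aᵀ J = A}` (isomorphic to `V ⊕ Λ²V`) in at most one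
`Sp_{2n}(ℂ)`-orbit: if `g ∈ GL_{2n}(ℂ)` sends `(u, uᵀ) + A` to `(u′, u′ᵀ) + A′`
(i.e. `g u = u′`, `θ(g) u = u′` and `g A g⁻¹ = A′`), then some `h ∈ Sp_{2n}(ℂ)`
satisfies `h u = u′` and `h A h⁻¹ = A′`. -/
theorem enhanced_theta_rep_orbit_embedding_Sp (n : ℕ) (hn : 1 ≤ n)
    (u u' : (Fin n ⊕ Fin n) → ℂ)
    (A A' : Matrix (Fin n ⊕ Fin n) (Fin n ⊕ Fin n) ℂ)
    (hA : (J n)⁻¹ * Aᵀ * J n = A) (hA' : (J n)⁻¹ * A'ᵀ * J n = A')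
    (g : Matrix (Fin n ⊕ Fin n) (Fin n ⊕ Fin n) ℂ) (hg : IsUnit g)
    (h1 : g *ᵥ u = u') (h2 : thetaG n g *ᵥ u = u')
    (h3 : g * A * g⁻¹ = A') :
    ∃ h : Matrix (Fin n ⊕ Fin n) (Fin n ⊕ Fin n) ℂ,
      hᵀ * J n * h = J n ∧ h *ᵥ u = u' ∧ h * A * h⁻¹ = A' :=
  enhanced_theta_rep_orbit_embedding_Sp_general (isUnit_J n) (.inr (transpose_J n)) hA hA' hg
    h1 h2 h3
end

section
/- Every polynomial function f on ℂ^{2n} × sp_{2n}(ℂ) satisfying f(g v, g A g⁻¹) = f(v, A) for all g ∈ Sp_{2n}(ℂ) lies in the quotient field of the ℂ-subalgebra generated by the Sp_{2n}(ℂ)-invariant polynomial functions depending only on the sp_{2n}(ℂ)-component A together with the functions γ_k(v, A) = vᵀ J A^k v for odd k ≥ 1: there exist functions p, q in that subalgebra with q not identically zero such that q·f = p as functions on ℂ^{2n} × sp_{2n}(ℂ). -/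
open Matrix

/-- The symplectic group, as the set `{g : gᵀ J g = J}`. -/
noncomputable def SpSet (n : ℕ) : Set (Matrix (Fin n ⊕ Fin n) (Fin n ⊕ Fin n) ℂ) :=
  {g | gᵀ * J n * g = J n}

/-- The symplectic Lie algebra `sp_{2n}(ℂ) = {A : Aᵀ J + J A = 0}`. -/
def spLie (n : ℕ) : Set (Matrix (Fin n ⊕ Fin n) (Fin n ⊕ Fin n) ℂ) :=
  {A | Aᵀ * J n + J n * A = 0}

/-- Points of the ambient space `ℂ^{2n} × M_{2n}(ℂ)` containing
`ℂ^{2n} ⊕ sp_{2n}(ℂ)`. -/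
abbrev EnhPt2 (n : ℕ) :=
  ((Fin n ⊕ Fin n) → ℂ) × Matrix (Fin n ⊕ Fin n) (Fin n ⊕ Fin n) ℂ

/-- Coordinate functions; polynomial functions are the elements of the
ℂ-subalgebra they generate. -/
def coordFns2 (n : ℕ) : Set (EnhPt2 n → ℂ) :=
  {f | ∃ i, f = fun p => p.1 i} ∪ {f | ∃ i j, f = fun p => p.2 i j}

/-- Polynomial functions on `ℂ^{2n} × M_{2n}(ℂ)`. -/
noncomputable def polyFns2 (n : ℕ) : Subalgebra ℂ (EnhPt2 n → ℂ) :=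
  Algebra.adjoin ℂ (coordFns2 n)

/-- Generators: `Sp_{2n}(ℂ)`-invariant polynomial functions depending only on the
`sp_{2n}(ℂ)`-component, together with `γ_k(v, A) = vᵀ J A^k v` for odd `k`. -/
def spInvGens (n : ℕ) : Set (EnhPt2 n → ℂ) :=
  {h | h ∈ polyFns2 n ∧ (∀ v v' A, h (v, A) = h (v', A)) ∧
    (∀ g ∈ SpSet n, ∀ v, ∀ A ∈ spLie n, h (g *ᵥ v, g * A * g⁻¹) = h (v, A))} ∪
  {h | ∃ k : ℕ, Odd k ∧ h = fun p => p.1 ⬝ᵥ ((J n * p.2 ^ k) *ᵥ p.1)}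

/-!
The moments `γ_k(v, A) = vᵀ J A ^ k v` vanish for even `k`, so the vectors `A ^ (2a) v`, `a < n`,
span an isotropic subspace, which pairs with the vectors `A ^ (2b + 1) v` through the Hankel matrix
`H = (γ_{2(a + b) + 1})`. Where `det H ≠ 0`, normalising this Krylov basis by `H⁻¹` gives a
symplectic basis, in which `v` is a fixed vector and `A` is a matrix with entries in
`K[γ_1, γ_3, …, γ_{4n - 1}, (det H)⁻¹]`. An invariant `f` takes the same value at `(v, A)` and at
this normal form, so multiplying `f` by a power of `det H` gives a polynomial in
`γ_1, γ_3, …, γ_{4n - 1}`.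
-/

section FunctionAlgebras

variable {R A m : Type*} [CommRing R] [CommRing A] [Algebra R A] [Fintype m] [DecidableEq m]

lemma exists_map_val_of_mem_matrix {S : Subalgebra R A} {M : Matrix m m A} (hM : M ∈ S.matrix) :
    ∃ N : Matrix m m S, S.val.mapMatrix N = M :=
  ⟨of fun i j => ⟨M i j, hM i j⟩, rfl⟩

lemma det_mem_of_mem_matrix {S : Subalgebra R A} {M : Matrix m m A} (hM : M ∈ S.matrix) :
    M.det ∈ S := by
  obtain ⟨N, rfl⟩ := exists_map_val_of_mem_matrix hM
  rw [← AlgHom.map_det]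
  exact N.det.2

lemma adjugate_mem_matrix {S : Subalgebra R A} {M : Matrix m m A} (hM : M ∈ S.matrix) :
    M.adjugate ∈ S.matrix := by
  obtain ⟨N, rfl⟩ := exists_map_val_of_mem_matrix hM
  rw [← AlgHom.map_adjugate]
  exact fun i j => (N.adjugate i j).2

variable {X K : Type*} [Field K]

/-- The matrix of functions `x ↦ (M x)⁻¹`. Its entries are zero wherever `det M` vanishes. -/
noncomputable def pointwiseInv (M : Matrix m m (X → K)) : Matrix m m (X → K) :=
  M.det⁻¹ • M.adjugate

lemma pointwiseInv_map_eval (M : Matrix m m (X → K)) (x : X) :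
    (pointwiseInv M).map (fun u => u x) = (M.map fun u => u x)⁻¹ := by
  have hdet : M.det x = (M.map fun u => u x).det := (Pi.evalRingHom (fun _ => K) x).map_det M
  have hadj : M.adjugate.map (fun u => u x) = (M.map fun u => u x).adjugate :=
    (Pi.evalRingHom (fun _ => K) x).map_adjugate M
  rw [Matrix.inv_def, Ring.inverse_eq_inv', ← hdet, ← hadj]
  rfl

lemma pointwiseInv_mem_matrix {S : Subalgebra K (X → K)} {M : Matrix m m (X → K)}
    (hM : M ∈ S.matrix) (hdet : M.det⁻¹ ∈ S) : pointwiseInv M ∈ S.matrix :=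
  fun i j => S.mul_mem hdet (adjugate_mem_matrix hM i j)

open scoped Pointwise in
lemma exists_pow_mul_mem_of_mem_adjoin_insert_inv {S : Subalgebra K (X → K)} {d u : X → K}
    (hd : d ∈ S) (hu : u ∈ Algebra.adjoin K (insert d⁻¹ (S : Set (X → K)))) :
    ∃ N : ℕ, d ^ N * u ∈ S := by
  have hcancel : d ^ 2 * d⁻¹ = d := by
    ext x
    by_cases hx : d x = 0 <;> simp [hx, pow_two]
  -- One factor `d` would not do: `d * d⁻¹` is the indicator function of `{d ≠ 0}`.
  have hsub : d ^ 2 • insert d⁻¹ (S : Set (X → K)) ⊆ S := by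
    rintro _ ⟨w, rfl | hw, rfl⟩
    · exact (congrArg (· ∈ S) hcancel).mpr hd
    · exact mul_mem (pow_mem hd 2) hw
  obtain ⟨N, hN⟩ := Algebra.pow_smul_mem_of_smul_subset_of_mem_adjoin (d ^ 2) _ S hsub hu
    (pow_mem hd 2)
  exact ⟨2 * N, by simpa only [pow_mul, smul_eq_mul] using hN N le_rfl⟩

end FunctionAlgebras

section PolynomialFunctions

/-- Pairs of a vector and a square matrix. -/
abbrev VecMat (ι R : Type*) := (ι → R) × Matrix ι ι R

/-- The coordinate functions on `VecMat ι R`; the `R`-subalgebra they generate is the algebra of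
polynomial functions. -/
def coordinateFunctions (ι R : Type*) : Set (VecMat ι R → R) :=
  {f | ∃ i, f = fun p => p.1 i} ∪ {f | ∃ i j, f = fun p => p.2 i j}

lemma comp_mem_of_mem_adjoin_coordinateFunctions {X ι R : Type*} [CommRing R]
    {S : Subalgebra R (X → R)} {Φ : X → VecMat ι R} {f : VecMat ι R → R}
    (hvec : ∀ i, (fun x => (Φ x).1 i) ∈ S) (hmat : ∀ i j, (fun x => (Φ x).2 i j) ∈ S)
    (hf : f ∈ Algebra.adjoin R (coordinateFunctions ι R)) : (fun x => f (Φ x)) ∈ S := by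
  induction hf using Algebra.adjoin_induction with
  | mem u hu =>
    obtain ⟨i, rfl⟩ | ⟨i, j, rfl⟩ := hu
    exacts [hvec i, hmat i j]
  | algebraMap r => exact S.algebraMap_mem r
  | add u w _ _ hu hw => exact add_mem hu hw
  | mul u w _ _ hu hw => exact mul_mem hu hw

end PolynomialFunctions

section HankelMatrices

variable {R : Type*}

/-- The `n × n` matrix with entries `μ (2 (a + b) + k)`: the Hankel matrix of the subsequence of
`μ` starting at `k` with step `2`. -/
def stepTwoHankel (n : ℕ) (μ : ℕ → R) (k : ℕ) : Matrix (Fin n) (Fin n) R :=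
  of fun a b => μ (2 * (a + b) + k)

lemma stepTwoHankel_transpose (n : ℕ) (μ : ℕ → R) (k : ℕ) :
    (stepTwoHankel n μ k)ᵀ = stepTwoHankel n μ k := by
  ext a b
  simp only [stepTwoHankel, transpose_apply, of_apply, add_comm]

lemma stepTwoHankel_mem_matrix {A : Type*} [CommRing R] [CommRing A] [Algebra R A]
    {S : Subalgebra R A} {n : ℕ} {μ : ℕ → A} (hμ : ∀ k, Odd k → k < 4 * n → μ k ∈ S) {k : ℕ}
    (hodd : Odd k) (hk : k ≤ 3) : stepTwoHankel n μ k ∈ S.matrix :=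
  fun a b => hμ _ ((even_two_mul _).add_odd hodd) (by omega)

end HankelMatrices

section SkewAdjoint

variable {ι R : Type*} [Fintype ι] [CommRing R]

lemma dotProduct_mulVec_self_eq_zero [NoZeroDivisors R] [NeZero (2 : R)] {C : Matrix ι ι R}
    (hC : Cᵀ = -C) (v : ι → R) : v ⬝ᵥ (C *ᵥ v) = 0 := by
  have hneg : v ⬝ᵥ (C *ᵥ v) = -(v ⬝ᵥ (C *ᵥ v)) := by
    rw [← dotProduct_neg, ← neg_mulVec, ← hC, mulVec_transpose, dotProduct_comm v (v ᵥ* C),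
      dotProduct_mulVec]
  have htwo : (2 : R) * (v ⬝ᵥ (C *ᵥ v)) = 0 := by linear_combination hneg
  exact (mul_eq_zero.mp htwo).resolve_left two_ne_zero

variable [DecidableEq ι] {B A : Matrix ι ι R}

lemma transpose_pow_mul_of_isSkewAdjoint (hA : B.IsSkewAdjoint A) (k : ℕ) :
    (A ^ k)ᵀ * B = B * (-A) ^ k := by
  have hsemi : SemiconjBy B (-A) Aᵀ := Eq.symm hA
  rw [transpose_pow]
  exact (hsemi.pow_right k).eq.symm

lemma dotProduct_mul_pow_mulVec_self_eq_zero [NoZeroDivisors R] [NeZero (2 : R)] (hB : Bᵀ = -B)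
    (hA : B.IsSkewAdjoint A) (v : ι → R) {k : ℕ} (hk : Even k) :
    v ⬝ᵥ ((B * A ^ k) *ᵥ v) = 0 := by
  refine dotProduct_mulVec_self_eq_zero ?_ v
  rw [transpose_mul, hB, Matrix.mul_neg, transpose_pow_mul_of_isSkewAdjoint hA, hk.neg_pow]

/-- The matrix with columns `v, A² v, …, A^(2(n - 1)) v`. -/
def evenKrylov (n : ℕ) (v : ι → R) (A : Matrix ι ι R) : Matrix ι (Fin n) R :=
  of fun i a => (A ^ (2 * (a : ℕ)) *ᵥ v) i

lemma evenKrylov_gram (hA : B.IsSkewAdjoint A) (n : ℕ) (v : ι → R) (k : ℕ) :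
    (evenKrylov n v A)ᵀ * (B * A ^ k) * evenKrylov n v A
      = stepTwoHankel n (fun j => v ⬝ᵥ ((B * A ^ j) *ᵥ v)) k := by
  ext a b
  calc ((evenKrylov n v A)ᵀ * (B * A ^ k) * evenKrylov n v A) a b
      = (A ^ (2 * (a : ℕ)) *ᵥ v) ⬝ᵥ ((B * A ^ k) *ᵥ (A ^ (2 * (b : ℕ)) *ᵥ v)) := by
        rw [Matrix.mul_assoc]; rfl
    _ = v ⬝ᵥ (((A ^ (2 * (a : ℕ)))ᵀ * B * A ^ k * A ^ (2 * (b : ℕ))) *ᵥ v) := by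
        simp only [Matrix.mul_assoc, ← mulVec_mulVec, dotProduct_mulVec v, vecMul_transpose]
    _ = v ⬝ᵥ ((B * A ^ (2 * ((a : ℕ) + b) + k)) *ᵥ v) := by
        rw [transpose_pow_mul_of_isSkewAdjoint hA, (even_two_mul _).neg_pow, Matrix.mul_assoc,
          Matrix.mul_assoc, ← pow_add, ← pow_add]
        ring_nf

lemma fromCols_gram {m : Type*} [Fintype m] (hA : B.IsSkewAdjoint A) (E : Matrix ι m R)
    (G : Matrix m m R) (k : ℕ) :
    (fromCols E (-(A * E * G)))ᵀ * (B * A ^ k) * fromCols E (-(A * E * G))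
      = fromBlocks (Eᵀ * (B * A ^ k) * E) (-(Eᵀ * (B * A ^ (k + 1)) * E * G))
          (Gᵀ * (Eᵀ * (B * A ^ (k + 1)) * E)) (-(Gᵀ * (Eᵀ * (B * A ^ (k + 2)) * E) * G)) := by
  have hmove (M : Matrix ι ι R) : Aᵀ * (B * M) = -(B * (A * M)) := by
    rw [← Matrix.mul_assoc, show Aᵀ * B = B * (-A) from hA, Matrix.mul_neg, Matrix.neg_mul,
      Matrix.mul_assoc]
  rw [transpose_fromCols, fromRows_mul, fromRows_mul_fromCols]
  congr 1
  · simp only [pow_succ, Matrix.mul_neg, Matrix.mul_assoc]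
  · simp only [pow_succ', transpose_neg, transpose_mul, Matrix.neg_mul, Matrix.mul_assoc, hmove,
      Matrix.mul_neg, neg_neg]
  · rw [pow_succ' A (k + 1), pow_succ A k]
    simp only [transpose_neg, transpose_mul, Matrix.neg_mul, Matrix.mul_assoc, hmove,
      Matrix.mul_neg, neg_neg]

end SkewAdjoint

section SymplecticSlice

variable {R : Type*} [CommRing R]

/-- The function `γ_k(v, A) = vᵀ J A ^ k v`, for Mathlib's form `J = [[0, -1], [1, 0]]`, which is
the negative of `_root_.J`. -/
def symplecticMoment {l : Type*} [Fintype l] [DecidableEq l] (k : ℕ) (p : VecMat (l ⊕ l) R) : R :=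
  p.1 ⬝ᵥ ((Matrix.J l R * p.2 ^ k) *ᵥ p.1)

/-- The `m`-th standard basis vector of `R ^ n`, counted from `0`; it is zero when `n ≤ m`. -/
def stdVec (R : Type*) [CommRing R] (n m : ℕ) : Fin n → R := fun i => if (i : ℕ) = m then 1 else 0

/-- The normal form of a pair `(v, A)` under the symplectic group, as a function of the sequence
`μ` of its moments. It is meaningful only if `stepTwoHankel n μ 1` is invertible. -/
noncomputable def slicePoint (n : ℕ) (μ : ℕ → R) : VecMat (Fin n ⊕ Fin n) R :=
  (Sum.elim (stdVec R n 0) 0,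
    fromBlocks 0 (-((stepTwoHankel n μ 1)⁻¹ * stepTwoHankel n μ 3 * (stepTwoHankel n μ 1)⁻¹))
      (-stepTwoHankel n μ 1) 0)

/-- The symplectic basis adapted to `p = (v, A)`, as the columns of a matrix: the Krylov vectors
`A ^ (2a) v`, followed by the combinations of the vectors `A ^ (2b + 1) v` that are dual to them.
The inverse makes sense only at the points where the Hankel matrix of the moments is invertible. -/
noncomputable def symplecticFrame (n : ℕ) (p : VecMat (Fin n ⊕ Fin n) R) :
    Matrix (Fin n ⊕ Fin n) (Fin n ⊕ Fin n) R :=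
  fromCols (evenKrylov n p.1 p.2)
    (-(p.2 * evenKrylov n p.1 p.2 * (stepTwoHankel n (symplecticMoment · p) 1)⁻¹))

lemma stdVec_eq_single {n m : ℕ} (hm : m < n) : stdVec R n m = Pi.single ⟨m, hm⟩ 1 := by
  ext i
  simp only [stdVec, Pi.single_apply, Fin.ext_iff]

lemma stdVec_eq_zero {n m : ℕ} (hm : n ≤ m) : stdVec R n m = 0 :=
  funext fun i => if_neg (by omega)

lemma symplecticFrame_mulVec (n : ℕ) (p : VecMat (Fin n ⊕ Fin n) R) :
    symplecticFrame n p *ᵥ Sum.elim (stdVec R n 0) 0 = p.1 := by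
  rw [symplecticFrame, fromCols_mulVec_sumElim, mulVec_zero, add_zero]
  obtain _ | n := n
  · exact Subsingleton.elim _ _
  · rw [stdVec_eq_single n.succ_pos, mulVec_single_one]
    ext i
    simp [evenKrylov]

section Sp

variable {n : ℕ} {p : VecMat (Fin n ⊕ Fin n) R}

lemma symplecticFrame_gram (hA : p.2 ∈ LieAlgebra.Symplectic.sp (Fin n) R) (k : ℕ) :
    letI H := stepTwoHankel n (symplecticMoment · p)
    (symplecticFrame n p)ᵀ * (Matrix.J (Fin n) R * p.2 ^ k) * symplecticFrame n p
      = fromBlocks (H k) (-(H (k + 1) * (H 1)⁻¹)) ((H 1)⁻¹ * H (k + 1))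
          (-((H 1)⁻¹ * H (k + 2) * (H 1)⁻¹)) := by
  have hskew : (Matrix.J (Fin n) R).IsSkewAdjoint p.2 :=
    (mem_skewAdjointMatricesSubmodule _ _).mp hA
  have hgram (j : ℕ) : (evenKrylov n p.1 p.2)ᵀ * (Matrix.J (Fin n) R * p.2 ^ j)
      * evenKrylov n p.1 p.2 = stepTwoHankel n (symplecticMoment · p) j :=
    evenKrylov_gram hskew n p.1 j
  rw [symplecticFrame, fromCols_gram hskew _ _ k, hgram, hgram, hgram, transpose_nonsing_inv,
    stepTwoHankel_transpose]

variable [NoZeroDivisors R] [NeZero (2 : R)]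

lemma stepTwoHankel_symplecticMoment_eq_zero (hA : p.2 ∈ LieAlgebra.Symplectic.sp (Fin n) R)
    {k : ℕ} (hk : Even k) : stepTwoHankel n (symplecticMoment · p) k = 0 := by
  ext a b
  exact dotProduct_mul_pow_mulVec_self_eq_zero (J_transpose _ _)
    ((mem_skewAdjointMatricesSubmodule _ _).mp hA) p.1 ((even_two_mul _).add hk)

lemma symplecticFrame_mem_symplecticGroup (hA : p.2 ∈ LieAlgebra.Symplectic.sp (Fin n) R)
    (hdet : IsUnit (stepTwoHankel n (symplecticMoment · p) 1).det) :
    symplecticFrame n p ∈ symplecticGroup (Fin n) R := by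
  have hgram := symplecticFrame_gram hA 0
  rw [stepTwoHankel_symplecticMoment_eq_zero hA Even.zero,
    stepTwoHankel_symplecticMoment_eq_zero hA (by decide : Even (0 + 2)), zero_add,
    mul_nonsing_inv _ hdet, nonsing_inv_mul _ hdet, pow_zero, Matrix.mul_one, Matrix.mul_zero,
    Matrix.zero_mul, neg_zero] at hgram
  exact SymplecticGroup.mem_iff'.mpr hgram

lemma symplecticFrame_conj (hA : p.2 ∈ LieAlgebra.Symplectic.sp (Fin n) R)
    (hdet : IsUnit (stepTwoHankel n (symplecticMoment · p) 1).det) :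
    (symplecticFrame n p)⁻¹ * p.2 * symplecticFrame n p
      = (slicePoint n (symplecticMoment · p)).2 := by
  have hgram := symplecticFrame_gram hA 1
  rw [stepTwoHankel_symplecticMoment_eq_zero hA (by decide : Even (1 + 1)), pow_one,
    Matrix.zero_mul, Matrix.mul_zero, neg_zero] at hgram
  rw [SymplecticGroup.inv_eq_symplectic_inv _ (symplecticFrame_mem_symplecticGroup hA hdet)]
  calc -Matrix.J (Fin n) R * (symplecticFrame n p)ᵀ * Matrix.J (Fin n) R * p.2
        * symplecticFrame n p
      = -Matrix.J (Fin n) R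
          * ((symplecticFrame n p)ᵀ * (Matrix.J (Fin n) R * p.2) * symplecticFrame n p) := by
        simp only [Matrix.mul_assoc]
    _ = (slicePoint n (symplecticMoment · p)).2 := by
        rw [hgram]
        simp [Matrix.J, slicePoint, fromBlocks_neg, fromBlocks_multiply]

theorem exists_mem_symplecticGroup_slicePoint
    (hA : p.2 ∈ LieAlgebra.Symplectic.sp (Fin n) R)
    (hdet : IsUnit (stepTwoHankel n (symplecticMoment · p) 1).det) :
    ∃ g ∈ symplecticGroup (Fin n) R,
      (g *ᵥ p.1, g * p.2 * g⁻¹) = slicePoint n (symplecticMoment · p) := by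
  have hmem := symplecticFrame_mem_symplecticGroup hA hdet
  have hunit := SymplecticGroup.symplectic_det hmem
  refine ⟨(symplecticFrame n p)⁻¹, ?_, Prod.ext ?_ ?_⟩
  · simpa only [SymplecticGroup.coe_inv'] using
      (⟨symplecticFrame n p, hmem⟩ : symplecticGroup (Fin n) R)⁻¹.2
  · change (symplecticFrame n p)⁻¹ *ᵥ p.1 = Sum.elim (stdVec R n 0) 0
    conv_lhs => rw [← symplecticFrame_mulVec n p]
    rw [mulVec_mulVec, nonsing_inv_mul _ hunit, one_mulVec]
  · rw [nonsing_inv_nonsing_inv _ hunit]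
    exact symplecticFrame_conj hA hdet

end Sp

lemma slicePoint_snd_mem {X K : Type*} [Field K] {n : ℕ} {μ : ℕ → X → K}
    {S : Subalgebra K (X → K)} (hμ : ∀ k, Odd k → k < 4 * n → μ k ∈ S)
    (hdet : (stepTwoHankel n μ 1).det⁻¹ ∈ S) (i j : Fin n ⊕ Fin n) :
    (fun x => (slicePoint n (μ · x)).2 i j) ∈ S := by
  have hH := stepTwoHankel_mem_matrix hμ odd_one (by norm_num)
  have hH₃ := stepTwoHankel_mem_matrix hμ (by decide : Odd 3) le_rfl
  have hinv := pointwiseInv_mem_matrix hH hdet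
  have hupper : ∀ x, (stepTwoHankel n (μ · x) 1)⁻¹ * stepTwoHankel n (μ · x) 3
        * (stepTwoHankel n (μ · x) 1)⁻¹
      = (pointwiseInv (stepTwoHankel n μ 1) * stepTwoHankel n μ 3
          * pointwiseInv (stepTwoHankel n μ 1)).map fun u => u x := by
    intro x
    have hmul (M N : Matrix (Fin n) (Fin n) (X → K)) :
        (M * N).map (fun u => u x) = M.map (fun u => u x) * N.map (fun u => u x) :=
      Matrix.map_mul (f := Pi.evalRingHom (fun _ => K) x)
    rw [hmul, hmul, pointwiseInv_map_eval]
    rfl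
  simp only [slicePoint, hupper]
  rcases i with a | a <;> rcases j with b | b
  · exact zero_mem S
  · exact neg_mem (mul_mem (mul_mem hinv hH₃) hinv a b)
  · exact neg_mem (hH a b)
  · exact zero_mem S

lemma exists_pow_mul_comp_slicePoint_mem {X K : Type*} [Field K] {n : ℕ} {μ : ℕ → X → K}
    {S : Subalgebra K (X → K)} (hμ : ∀ k, Odd k → k < 4 * n → μ k ∈ S)
    {f : VecMat (Fin n ⊕ Fin n) K → K}
    (hf : f ∈ Algebra.adjoin K (coordinateFunctions (Fin n ⊕ Fin n) K)) :
    ∃ N : ℕ, (stepTwoHankel n μ 1).det ^ N * (fun x => f (slicePoint n (μ · x))) ∈ S := by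
  refine exists_pow_mul_mem_of_mem_adjoin_insert_inv
    (det_mem_of_mem_matrix (stepTwoHankel_mem_matrix hμ odd_one (by norm_num))) ?_
  refine comp_mem_of_mem_adjoin_coordinateFunctions (fun i => Subalgebra.algebraMap_mem _ _)
    (slicePoint_snd_mem (fun k hodd hk => ?_) ?_) hf
  · exact Algebra.subset_adjoin (Set.mem_insert_of_mem _ (hμ k hodd hk))
  · exact Algebra.subset_adjoin (Set.mem_insert _ _)

end SymplecticSlice

section RegularPoint

variable {R : Type*} [CommRing R]

lemma fromBlocks_antidiagonal_mem_sp {l : Type*} [Fintype l] [DecidableEq l] {B C : Matrix l l R}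
    (hB : Bᵀ = B) (hC : Cᵀ = C) : fromBlocks 0 B C 0 ∈ LieAlgebra.Symplectic.sp l R := by
  refine (mem_skewAdjointMatricesSubmodule _ _).mpr ?_
  simp [Matrix.IsSkewAdjoint, Matrix.IsAdjointPair, Matrix.J, fromBlocks_transpose,
    fromBlocks_multiply, fromBlocks_neg, hB, hC]

lemma symplecticMoment_fromBlocks_antidiagonal {l : Type*} [Fintype l] [DecidableEq l]
    (B C : Matrix l l R) (u : l → R) (m : ℕ) :
    symplecticMoment (2 * m + 1) (Sum.elim u 0, fromBlocks 0 B C 0)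
      = -(u ⬝ᵥ (C *ᵥ ((B * C) ^ m *ᵥ u))) := by
  have hpow : fromBlocks 0 B C 0 ^ (2 * m + 1)
      = fromBlocks 0 (B * (C * B) ^ m) (C * (B * C) ^ m) 0 := by
    rw [pow_succ', pow_mul, pow_two, fromBlocks_multiply]
    simp [fromBlocks_diagonal_pow, fromBlocks_multiply]
  rw [symplecticMoment, hpow]
  simp [Matrix.J, fromBlocks_multiply, fromBlocks_mulVec, neg_mulVec]

/-- The `n × n` matrix with ones on the antidiagonal `i + j = t` and zeros elsewhere. -/
def antidiagonalMatrix (R : Type*) [CommRing R] (n t : ℕ) : Matrix (Fin n) (Fin n) R :=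
  of fun i j => if (i : ℕ) + j = t then 1 else 0

lemma antidiagonalMatrix_transpose (n t : ℕ) :
    (antidiagonalMatrix R n t)ᵀ = antidiagonalMatrix R n t := by
  ext i j
  simp only [antidiagonalMatrix, transpose_apply, of_apply, add_comm]

lemma antidiagonalMatrix_mulVec_stdVec {n m t : ℕ} (hm : m < n) (hmt : m ≤ t) :
    antidiagonalMatrix R n t *ᵥ stdVec R n m = stdVec R n (t - m) := by
  rw [stdVec_eq_single hm, mulVec_single_one]
  ext i
  simp only [antidiagonalMatrix, stdVec, col_apply, of_apply]
  congr 1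
  exact propext (by omega)

lemma mul_antidiagonalMatrix_pow_mulVec_stdVec (n m : ℕ) :
    (antidiagonalMatrix R n n * antidiagonalMatrix R n (n - 1)) ^ m *ᵥ stdVec R n 0
      = stdVec R n m := by
  induction m with
  | zero => rw [pow_zero, one_mulVec]
  | succ m ih =>
    rw [pow_succ', ← mulVec_mulVec, ih, ← mulVec_mulVec]
    obtain hm | hm := lt_or_ge m n
    · rw [antidiagonalMatrix_mulVec_stdVec hm (by omega),
        antidiagonalMatrix_mulVec_stdVec (by omega) (by omega)]
      congr 1
      omega
    · rw [stdVec_eq_zero hm, stdVec_eq_zero (hm.trans m.le_succ), mulVec_zero, mulVec_zero]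

lemma isUnit_det_antidiagonalMatrix (n : ℕ) : IsUnit (antidiagonalMatrix R n (n - 1)).det := by
  have hperm : antidiagonalMatrix R n (n - 1) = Fin.revPerm.permMatrix R := by
    ext i j
    simp only [antidiagonalMatrix, of_apply, Equiv.Perm.permMatrix, Equiv.toPEquiv_apply,
      PEquiv.toMatrix_apply, Fin.revPerm_apply, Option.mem_some_iff, Fin.ext_iff, Fin.val_rev]
    congr 1
    exact propext (by omega)
  rw [hperm, det_permutation]
  exact (Equiv.Perm.sign _).isUnit.map (Int.castRingHom R)

-- At this point `A` is nilpotent with cyclic vector `v`.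
theorem exists_isUnit_det_stepTwoHankel_symplecticMoment (R : Type*) [CommRing R] (n : ℕ) :
    ∃ p : VecMat (Fin n ⊕ Fin n) R, p.2 ∈ LieAlgebra.Symplectic.sp (Fin n) R ∧
      IsUnit (stepTwoHankel n (symplecticMoment · p) 1).det := by
  refine ⟨(Sum.elim (stdVec R n 0) 0,
      fromBlocks 0 (antidiagonalMatrix R n n) (antidiagonalMatrix R n (n - 1)) 0),
    fromBlocks_antidiagonal_mem_sp (antidiagonalMatrix_transpose _ _)
      (antidiagonalMatrix_transpose _ _), ?_⟩
  have hHankel : stepTwoHankel n (symplecticMoment · (Sum.elim (stdVec R n 0) 0,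
      fromBlocks 0 (antidiagonalMatrix R n n) (antidiagonalMatrix R n (n - 1)) 0)) 1
        = -antidiagonalMatrix R n (n - 1) := by
    ext a b
    rw [stepTwoHankel, of_apply, symplecticMoment_fromBlocks_antidiagonal,
      mul_antidiagonalMatrix_pow_mulVec_stdVec, dotProduct_mulVec, ← mulVec_transpose,
      antidiagonalMatrix_transpose, antidiagonalMatrix_mulVec_stdVec a.pos (Nat.zero_le _),
      Nat.sub_zero, stdVec_eq_single (Nat.sub_one_lt_of_lt a.pos), single_one_dotProduct]
    simp only [stdVec, antidiagonalMatrix, Matrix.neg_apply, of_apply, eq_comm]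
  rw [hHankel, det_neg]
  exact (isUnit_one.neg.pow _).mul (isUnit_det_antidiagonalMatrix n)

end RegularPoint

section RationalGeneration

variable {K : Type*} [Field K]

theorem Sp_invariants_rationally_generated_general [NeZero (2 : K)] (n : ℕ)
    (f : VecMat (Fin n ⊕ Fin n) K → K)
    (hf : f ∈ Algebra.adjoin K (coordinateFunctions (Fin n ⊕ Fin n) K))
    (hinv : ∀ g ∈ symplecticGroup (Fin n) K, ∀ v, ∀ A ∈ LieAlgebra.Symplectic.sp (Fin n) K,
      f (g *ᵥ v, g * A * g⁻¹) = f (v, A)) :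
    ∃ p ∈ Algebra.adjoin K (symplecticMoment '' {k | Odd k ∧ k < 4 * n}),
      ∃ q ∈ Algebra.adjoin K (symplecticMoment '' {k | Odd k ∧ k < 4 * n}),
        (∃ v, ∃ A ∈ LieAlgebra.Symplectic.sp (Fin n) K, q (v, A) ≠ 0) ∧
        ∀ v, ∀ A ∈ LieAlgebra.Symplectic.sp (Fin n) K, q (v, A) * f (v, A) = p (v, A) := by
  set S : Subalgebra K (VecMat (Fin n ⊕ Fin n) K → K) :=
    Algebra.adjoin K (symplecticMoment '' {k | Odd k ∧ k < 4 * n})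
  set d := (stepTwoHankel n (symplecticMoment (l := Fin n) (R := K)) 1).det
  have hd_apply (p) : d p = (stepTwoHankel n (symplecticMoment · p) 1).det :=
    (Pi.evalRingHom (fun _ => K) p).map_det _
  have hmoment (k : ℕ) (hodd : Odd k) (hk : k < 4 * n) : symplecticMoment k ∈ S :=
    Algebra.subset_adjoin ⟨k, ⟨hodd, hk⟩, rfl⟩
  have hd : d ∈ S :=
    det_mem_of_mem_matrix (stepTwoHankel_mem_matrix hmoment odd_one (by norm_num))
  obtain ⟨N, hN⟩ := exists_pow_mul_comp_slicePoint_mem hmoment hf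
  refine ⟨_, mul_mem hd hN, d ^ (N + 1), pow_mem hd _, ?_, fun v A hA => ?_⟩
  · obtain ⟨p, hA, hunit⟩ := exists_isUnit_det_stepTwoHankel_symplecticMoment K n
    exact ⟨p.1, p.2, hA, pow_ne_zero _ (hd_apply p ▸ hunit.ne_zero)⟩
  · have hslice : d (v, A) ≠ 0 → f (slicePoint n (symplecticMoment · (v, A))) = f (v, A) := by
      intro hne
      obtain ⟨g, hg, hgp⟩ := exists_mem_symplecticGroup_slicePoint (p := (v, A)) hA
        (hd_apply (v, A) ▸ isUnit_iff_ne_zero.mpr hne)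
      rw [← hgp, hinv g hg v A hA]
    by_cases hzero : d (v, A) = 0
    · simp only [Pi.mul_apply, Pi.pow_apply, hzero, zero_mul, pow_succ, mul_zero]
    · simp only [Pi.mul_apply, Pi.pow_apply, hslice hzero]
      ring

end RationalGeneration

section ComplexSymplectic

lemma J_eq_neg_matrixJ (n : ℕ) : _root_.J n = -Matrix.J (Fin n) ℂ := by
  simp [_root_.J, Matrix.J, fromBlocks_neg]

lemma SpSet_eq_symplecticGroup (n : ℕ) : SpSet n = symplecticGroup (Fin n) ℂ := by
  ext g
  simp [SpSet, J_eq_neg_matrixJ, SymplecticGroup.mem_iff']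

lemma spLie_eq_sp (n : ℕ) : spLie n = LieAlgebra.Symplectic.sp (Fin n) ℂ := by
  ext A
  have hiff : A ∈ LieAlgebra.Symplectic.sp (Fin n) ℂ
      ↔ Aᵀ * Matrix.J (Fin n) ℂ = Matrix.J (Fin n) ℂ * (-A) :=
    mem_skewAdjointMatricesSubmodule _ _
  rw [SetLike.mem_coe, hiff, Matrix.mul_neg, eq_neg_iff_add_eq_zero, spLie, Set.mem_ofPred_eq,
    J_eq_neg_matrixJ, Matrix.mul_neg, Matrix.neg_mul, ← neg_add, neg_eq_zero]

lemma adjoin_symplecticMoment_le_adjoin_spInvGens {n : ℕ} {I : Set ℕ} (hI : ∀ k ∈ I, Odd k) :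
    Algebra.adjoin ℂ (symplecticMoment (l := Fin n) '' I) ≤ Algebra.adjoin ℂ (spInvGens n) := by
  refine Algebra.adjoin_le ?_
  rintro _ ⟨k, hk, rfl⟩
  have hneg : symplecticMoment (l := Fin n) (R := ℂ) k
      = -fun p => p.1 ⬝ᵥ ((_root_.J n * p.2 ^ k) *ᵥ p.1) := by
    ext p
    simp [symplecticMoment, J_eq_neg_matrixJ, neg_mulVec]
  rw [hneg]
  exact neg_mem (Algebra.subset_adjoin (Or.inr ⟨k, hI k hk, rfl⟩))

end ComplexSymplectic

/-- Every `Sp_{2n}(ℂ)`-invariant polynomial function on `ℂ^{2n} ⊕ sp_{2n}(ℂ)` lies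
in the quotient field of the subalgebra generated by the invariants on
`sp_{2n}(ℂ)` and the `γ_k` for odd `k ≥ 1`:  there are `p, q` in this subalgebra,
`q` not identically zero on `ℂ^{2n} ⊕ sp_{2n}(ℂ)`, with `q·f = p` there. -/
theorem Sp_invariants_rationally_generated (n : ℕ) (hn : 1 ≤ n)
    (f : EnhPt2 n → ℂ) (hf : f ∈ polyFns2 n)
    (hinv : ∀ g ∈ SpSet n, ∀ v, ∀ A ∈ spLie n, f (g *ᵥ v, g * A * g⁻¹) = f (v, A)) :
    ∃ p q : EnhPt2 n → ℂ,
      p ∈ Algebra.adjoin ℂ (spInvGens n) ∧ q ∈ Algebra.adjoin ℂ (spInvGens n) ∧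
      (¬ ∀ v, ∀ A ∈ spLie n, q (v, A) = 0) ∧
      (∀ v, ∀ A ∈ spLie n, q (v, A) * f (v, A) = p (v, A)) := by
  simp only [SpSet_eq_symplecticGroup, spLie_eq_sp] at hinv ⊢
  obtain ⟨p, hp, q, hq, ⟨v, A, hA, hne⟩, hqf⟩ :=
    Sp_invariants_rationally_generated_general n f hf hinv
  have hle := adjoin_symplecticMoment_le_adjoin_spInvGens (n := n)
    (I := {k | Odd k ∧ k < 4 * n}) fun _ hk => hk.1
  exact ⟨p, q, hle hp, hle hq, fun h => hne (h v A hA), hqf⟩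
end
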